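/- arXiv:2407.13491 — 5 statements merged into one kernel-verified Lean document; each statement's English description precedes it below -/
import Mathlib

section
/- Let g_B, g_E, σ² > 0 and ρ ∈ (0,1] with g_B − g_E·ρ² > 0. Then the function P_B ↦ log₂(1 + P_B·(g_B − g_E·ρ²)/(P_B·g_E·ρ² + σ²)) is strictly monotonically increasing on [0, ∞). Consequently, without artificial noise and under the secure condition, the achievable secrecy rate increases monotonically with the power allocated to the legitimate user. -/
/-!
Writing the argument of the logarithm as `(P * gB + σ2) / (P * gE' + σ2)` with `gE' = gE * ρ ^ 2`
exhibits it as a linear fractional function of the power `P`. Its determinant is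
`σ2 * (gB - gE')`, which is positive exactly under the secure condition.
-/

theorem strictMonoOn_linear_fractional {K : Type*} [Field K] [LinearOrder K]
    [IsStrictOrderedRing K] {a b c d : K} (hdet : 0 < a * d - b * c) :
    StrictMonoOn (fun x ↦ (x * a + b) / (x * c + d)) {x | 0 < x * c + d} := by
  intro x hx y hy hxy
  have cross_diff : (y * a + b) * (x * c + d) - (x * a + b) * (y * c + d) =
      (a * d - b * c) * (y - x) := by ring
  refine (div_lt_div_iff₀ hx hy).2 (sub_pos.1 ?_)
  exact cross_diff ▸ mul_pos hdet (sub_pos.2 hxy)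

theorem one_add_mul_sub_div {K : Type*} [Field K] {x a c d : K} (hden : x * c + d ≠ 0) :
    1 + x * (a - c) / (x * c + d) = (x * a + d) / (x * c + d) := by
  rw [one_add_div hden]
  ring

theorem stmt_1_general {b gB gE σ2 : ℝ} (hb : 1 < b) (hgE : 0 ≤ gE) (hσ : 0 < σ2)
    (hsec : gE < gB) :
    StrictMonoOn (fun P ↦ Real.logb b (1 + P * (gB - gE) / (P * gE + σ2))) (Set.Ici 0) := by
  have power_pos {g : ℝ} (hg : 0 ≤ g) : ∀ P ∈ Set.Ici (0 : ℝ), 0 < P * g + σ2 :=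
    fun P hP ↦ add_pos_of_nonneg_of_pos (mul_nonneg hP hg) hσ
  have hdet : 0 < gB * σ2 - σ2 * gE := by
    rw [mul_comm gB, ← mul_sub]
    exact mul_pos hσ (sub_pos.2 hsec)
  have ratio_strictMono : StrictMonoOn (fun P ↦ (P * gB + σ2) / (P * gE + σ2)) (Set.Ici 0) :=
    (strictMonoOn_linear_fractional hdet).mono (power_pos hgE)
  have ratio_pos : Set.MapsTo (fun P ↦ (P * gB + σ2) / (P * gE + σ2)) (Set.Ici 0) (Set.Ioi 0) :=
    fun P hP ↦ div_pos (power_pos (hgE.trans hsec.le) P hP) (power_pos hgE P hP)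
  refine ((Real.strictMonoOn_logb hb).comp ratio_strictMono ratio_pos).congr fun P hP ↦ ?_
  exact congrArg (Real.logb b) (one_add_mul_sub_div (power_pos hgE P hP).ne').symm

/-- Without artificial noise, under the secure condition `g_B - g_E ρ² > 0`,
the secrecy rate is strictly increasing in the power `P_B` on `[0, ∞)`. -/
theorem stmt_1 (gB gE σ2 ρ : ℝ)
    (hgB : 0 < gB) (hgE : 0 < gE) (hσ : 0 < σ2)
    (hρ0 : 0 < ρ) (hρ1 : ρ ≤ 1) (hsec : 0 < gB - gE * ρ ^ 2) :
    StrictMonoOn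
      (fun PB : ℝ =>
        Real.logb 2 (1 + PB * (gB - gE * ρ ^ 2) / (PB * gE * ρ ^ 2 + σ2)))
      (Set.Ici 0) := by
  simpa only [mul_assoc] using
    stmt_1_general one_lt_two (mul_nonneg hgE.le (sq_nonneg ρ)) hσ (sub_pos.1 hsec)
end

section
/- Let P > 0, g_B, g_E, σ² > 0, and ρ ∈ (0,1). Suppose g_B − g_E·ρ² < 0 and g_B − g_E·ρ² ≥ −P·g_B·g_E·(1 − ρ⁴)/σ². Define P_{E,min} = (g_E·ρ² − g_B)·σ²/(g_B·g_E·(1 − ρ⁴)). Then 0 < P_{E,min} ≤ P, and for every P_E with P_{E,min} ≤ P_E ≤ P and P_B = P − P_E, the secrecy rate R = log₂(1 + P_B·g_B/(P_E·g_B·ρ² + σ²)) − log₂(1 + P_B·g_E·ρ²/(P_E·g_E + σ²)) is nonnegative. (Security is regained by allocating at least P_{E,min} power to artificial noise.) -/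
/-!
At a receiver with signal gain `a` and artificial-noise gain `c`, the SINR per unit of signal power
is `a / (PE * c + σ2)`. Comparing two such fractions by cross-multiplication leaves an inequality
that is affine in `PE`. The user has `(a, c) = (gB, gB * ρ ^ 2)` and the eavesdropper
`(a, c) = (gE * ρ ^ 2, gE)`, so the slope in `PE` is `gB * gE * (1 - ρ ^ 4) > 0`, and the secrecy
rate changes sign exactly at `PE = P_{E,min}`.
-/

/-- The signal-to-interference-plus-noise ratio for signal power `PS` received with gain `a` and
artificial-noise power `PN` received with gain `c`, in background noise of power `σ2`. -/
noncomputable def sinr (PS PN a c σ2 : ℝ) : ℝ :=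
  PS * a / (PN * c + σ2)

/-- The secrecy rate for signal power `PB` and artificial-noise power `PE`. The signal is beamed at
the user and the artificial noise at the eavesdropper, so each reaches the other receiver
attenuated by `ρ ^ 2`. The difference of rates is not truncated at `0`. -/
noncomputable def secrecyRate (PB PE gB gE σ2 ρ : ℝ) : ℝ :=
  Real.logb 2 (1 + sinr PB PE gB (gB * ρ ^ 2) σ2)
    - Real.logb 2 (1 + sinr PB PE (gE * ρ ^ 2) gE σ2)

/-- The threshold `P_{E,min}`: the artificial-noise power at which the user and the eavesdropper
have equal SINR. -/
noncomputable def minNoisePower (gB gE σ2 ρ : ℝ) : ℝ :=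
  (gE * ρ ^ 2 - gB) * σ2 / (gB * gE * (1 - ρ ^ 4))

theorem sinr_nonneg {PS PN a c σ2 : ℝ} (hPS : 0 ≤ PS) (ha : 0 ≤ a) (hN : 0 ≤ PN * c + σ2) :
    0 ≤ sinr PS PN a c σ2 :=
  div_nonneg (mul_nonneg hPS ha) hN

theorem sinr_le_sinr_iff {PS PN a b c d σ2 : ℝ} (hPS : 0 < PS)
    (hc : 0 < PN * c + σ2) (hd : 0 < PN * d + σ2) :
    sinr PS PN a c σ2 ≤ sinr PS PN b d σ2 ↔ (a - b) * σ2 ≤ PN * (b * c - a * d) :=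
  calc sinr PS PN a c σ2 ≤ sinr PS PN b d σ2
      ↔ a / (PN * c + σ2) ≤ b / (PN * d + σ2) := by
        simp only [sinr, mul_div_assoc, mul_le_mul_iff_right₀ hPS]
    _ ↔ a * (PN * d + σ2) ≤ b * (PN * c + σ2) := div_le_div_iff₀ hc hd
    _ ↔ (a - b) * σ2 ≤ PN * (b * c - a * d) := by
        constructor <;> intro h <;> linarith

theorem logb_one_add_sub_nonneg_iff {b x y : ℝ} (hb : 1 < b) (hx : -1 < x) (hy : -1 < y) :
    0 ≤ Real.logb b (1 + x) - Real.logb b (1 + y) ↔ y ≤ x := by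
  rw [sub_nonneg, Real.logb_le_logb hb (by linarith) (by linarith), add_le_add_iff_left]

theorem secrecyRate_zero_left (PE gB gE σ2 ρ : ℝ) : secrecyRate 0 PE gB gE σ2 ρ = 0 := by
  simp [secrecyRate, sinr]

section Threshold

variable {P PB PE gB gE σ2 ρ : ℝ}

theorem mul_mul_one_sub_pow_four_pos (hgB : 0 < gB) (hgE : 0 < gE) (hρ : ρ ^ 4 < 1) :
    0 < gB * gE * (1 - ρ ^ 4) :=
  mul_pos (mul_pos hgB hgE) (sub_pos.2 hρ)

theorem minNoisePower_pos_iff (hgB : 0 < gB) (hgE : 0 < gE) (hσ : 0 < σ2) (hρ : ρ ^ 4 < 1) :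
    0 < minNoisePower gB gE σ2 ρ ↔ gB - gE * ρ ^ 2 < 0 := by
  rw [minNoisePower, div_pos_iff_of_pos_right (mul_mul_one_sub_pow_four_pos hgB hgE hρ),
    mul_pos_iff_of_pos_right hσ, sub_pos, sub_neg]

theorem minNoisePower_le_iff (hgB : 0 < gB) (hgE : 0 < gE) (hσ : 0 < σ2) (hρ : ρ ^ 4 < 1) :
    minNoisePower gB gE σ2 ρ ≤ P ↔ -(P * gB * gE * (1 - ρ ^ 4)) / σ2 ≤ gB - gE * ρ ^ 2 := by
  rw [minNoisePower, div_le_iff₀ (mul_mul_one_sub_pow_four_pos hgB hgE hρ), div_le_iff₀ hσ]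
  constructor <;> intro h <;> linarith

theorem eavesdropper_sinr_le_user_sinr_iff (hPB : 0 < PB) (hPE : 0 ≤ PE) (hgB : 0 < gB)
    (hgE : 0 < gE) (hσ : 0 < σ2) (hρ : ρ ^ 4 < 1) :
    sinr PB PE (gE * ρ ^ 2) gE σ2 ≤ sinr PB PE gB (gB * ρ ^ 2) σ2 ↔
      minNoisePower gB gE σ2 ρ ≤ PE := by
  have slope : gB * gE - gE * ρ ^ 2 * (gB * ρ ^ 2) = gB * gE * (1 - ρ ^ 4) := by ring
  rw [sinr_le_sinr_iff hPB (by positivity) (by positivity), slope, minNoisePower,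
    div_le_iff₀ (mul_mul_one_sub_pow_four_pos hgB hgE hρ)]

theorem secrecyRate_nonneg_iff (hPB : 0 < PB) (hPE : 0 ≤ PE) (hgB : 0 < gB) (hgE : 0 < gE)
    (hσ : 0 < σ2) (hρ : ρ ^ 4 < 1) :
    0 ≤ secrecyRate PB PE gB gE σ2 ρ ↔ minNoisePower gB gE σ2 ρ ≤ PE := by
  have hB : 0 ≤ sinr PB PE gB (gB * ρ ^ 2) σ2 := sinr_nonneg hPB.le hgB.le (by positivity)
  have hE : 0 ≤ sinr PB PE (gE * ρ ^ 2) gE σ2 :=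
    sinr_nonneg hPB.le (by positivity) (by positivity)
  rw [secrecyRate, logb_one_add_sub_nonneg_iff one_lt_two (by linarith) (by linarith),
    eavesdropper_sinr_le_user_sinr_iff hPB hPE hgB hgE hσ hρ]

end Threshold

/-- Regaining security with artificial noise: if `g_B - g_E ρ² < 0` but
`g_B - g_E ρ² ≥ -P g_B g_E (1-ρ⁴)/σ²`, then `0 < P_{E,min} ≤ P` and for every
AN power `P_E ∈ [P_{E,min}, P]` (with `P_B = P - P_E`) the secrecy rate is
nonnegative. -/
theorem stmt_5 (P gB gE σ2 ρ : ℝ)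
    (hP : 0 < P) (hgB : 0 < gB) (hgE : 0 < gE) (hσ : 0 < σ2)
    (hρ0 : 0 < ρ) (hρ1 : ρ < 1)
    (hins : gB - gE * ρ ^ 2 < 0)
    (hcond : gB - gE * ρ ^ 2 ≥ -(P * gB * gE * (1 - ρ ^ 4)) / σ2)
    (PEmin : ℝ)
    (hmin : PEmin = (gE * ρ ^ 2 - gB) * σ2 / (gB * gE * (1 - ρ ^ 4))) :
    (0 < PEmin ∧ PEmin ≤ P) ∧
    ∀ PE : ℝ, PEmin ≤ PE → PE ≤ P →
      0 ≤ Real.logb 2 (1 + (P - PE) * gB / (PE * gB * ρ ^ 2 + σ2))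
          - Real.logb 2 (1 + (P - PE) * gE * ρ ^ 2 / (PE * gE + σ2)) := by
  have hρ : ρ ^ 4 < 1 := pow_lt_one₀ hρ0.le hρ1 four_ne_zero
  change PEmin = minNoisePower gB gE σ2 ρ at hmin
  subst hmin
  have hmin_pos : 0 < minNoisePower gB gE σ2 ρ := (minNoisePower_pos_iff hgB hgE hσ hρ).2 hins
  refine ⟨⟨hmin_pos, (minNoisePower_le_iff hgB hgE hσ hρ).2 hcond⟩, fun PE hmin_le hle => ?_⟩
  suffices h : 0 ≤ secrecyRate (P - PE) PE gB gE σ2 ρ by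
    simpa only [secrecyRate, sinr, mul_assoc] using h
  rcases hle.eq_or_lt with rfl | hlt
  · rw [sub_self, secrecyRate_zero_left]
  · have hPE : 0 ≤ PE := hmin_pos.le.trans hmin_le
    exact (secrecyRate_nonneg_iff (sub_pos.2 hlt) hPE hgB hgE hσ hρ).2 hmin_le
end

section
/- Let P_B > 0, P_E ≥ 0, and g_B, g_E, σ² > 0. Then the secrecy rate ρ ↦ log₂(1 + P_B·g_B/(P_E·g_B·ρ² + σ²)) − log₂(1 + P_B·g_E·ρ²/(P_E·g_E + σ²)) is strictly monotonically decreasing in the correlation ρ on (0, 1]. -/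
/-!
A larger correlation leaks more artificial noise to the legitimate user and more signal to the
eavesdropper. Hence the user's rate does not increase with `ρ`, while the eavesdropper's rate
strictly increases. The strictness comes from the eavesdropper alone: without artificial noise
(`PE = 0`) the user's rate is constant.
-/

open Set Real

section Rates

variable {β c d σ : ℝ}

lemma antitoneOn_logb_one_add_div (hβ : 1 < β) (hc : 0 ≤ c) (hd : 0 ≤ d) (hσ : 0 < σ) :
    AntitoneOn (fun x : ℝ => logb β (1 + c / (d * x + σ))) (Ici 0) := by
  intro x (hx : 0 ≤ x) y (hy : 0 ≤ y) hxy
  refine logb_le_logb_of_le hβ (by positivity) ?_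
  gcongr

lemma strictMonoOn_logb_one_add_mul_div (hβ : 1 < β) (hc : 0 < c) (hd : 0 < d) :
    StrictMonoOn (fun x : ℝ => logb β (1 + c * x / d)) (Ici 0) := by
  intro x (hx : 0 ≤ x) y _ hxy
  refine logb_lt_logb hβ (by positivity) ?_
  gcongr

end Rates

theorem stmt_13_general {β PB PE gB gE σ2 : ℝ} (hβ : 1 < β)
    (hPB : 0 < PB) (hPE : 0 ≤ PE) (hgB : 0 ≤ gB) (hgE : 0 < gE) (hσ : 0 < σ2) :
    StrictAntiOn
      (fun ρ : ℝ =>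
        logb β (1 + PB * gB / (PE * gB * ρ ^ 2 + σ2))
          - logb β (1 + PB * gE * ρ ^ 2 / (PE * gE + σ2)))
      (Ici 0) := by
  have sq_strictMonoOn : StrictMonoOn (fun ρ : ℝ => ρ ^ 2) (Ici 0) :=
    pow_left_strictMonoOn₀ two_ne_zero
  have sq_mapsTo : MapsTo (fun ρ : ℝ => ρ ^ 2) (Ici 0) (Ici 0) := fun ρ _ => sq_nonneg ρ
  have user_antitoneOn :=
    (antitoneOn_logb_one_add_div hβ (c := PB * gB) (d := PE * gB)
      (by positivity) (by positivity) hσ).comp_MonotoneOn sq_strictMonoOn.monotoneOn sq_mapsTo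
  have eavesdropper_strictMonoOn :=
    (strictMonoOn_logb_one_add_mul_div hβ (c := PB * gE) (d := PE * gE + σ2)
      (by positivity) (by positivity)).comp sq_strictMonoOn sq_mapsTo
  simpa only [sub_eq_add_neg, Function.comp_def] using
    user_antitoneOn.add_strictAnti eavesdropper_strictMonoOn.neg

/-- The secrecy rate is strictly monotonically decreasing in the correlation
`ρ` on `(0, 1]`. -/
theorem stmt_13 (PB PE gB gE σ2 : ℝ)
    (hPB : 0 < PB) (hPE : 0 ≤ PE)
    (hgB : 0 < gB) (hgE : 0 < gE) (hσ : 0 < σ2) :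
    StrictAntiOn
      (fun ρ : ℝ =>
        Real.logb 2 (1 + PB * gB / (PE * gB * ρ ^ 2 + σ2))
          - Real.logb 2 (1 + PB * gE * ρ ^ 2 / (PE * gE + σ2)))
      (Set.Ioc 0 1) :=
  (stmt_13_general one_lt_two hPB hPE hgB.le hgE hσ).mono fun _ hρ => hρ.1.le
end

section
/- Let N be a positive integer, λ > 0, β > 0, θ ∈ (−1, 1), and set d = λ/2, r_BD = N²·d²·(1 − θ²)/(2·λ·β²), r_Ray = 2·(N·d)²/λ, and r_DT = N²·λ·(1 − θ²)/(8·β² + 2·(1 − θ²)). Then 0 < r_DT < r_BD and r_DT·r_BD/(r_BD − r_DT) = r_Ray; i.e., r_DT is exactly the distance whose right beam-depth boundary equals the Rayleigh distance. -/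
/-! In terms of reciprocal distances the right boundary map is a translation: a user at distance `r`
has its right boundary at the distance with reciprocal `1 / r - 1 / r_BD`. So the right boundary of
`r` is `r_Ray` exactly when `1 / r = 1 / r_BD + 1 / r_Ray`, and `r_DT` is half the harmonic mean of
`r_BD` and `r_Ray`; in particular it lies below `r_BD`. The argument depends on the array only
through its aperture, not on the antenna spacing. -/

section Field

variable {K : Type*} [Field K]

/-- The Rayleigh distance of an array of aperture `D` at wavelength `lam`. -/
def rayleighDistance (D lam : K) : K :=
  2 * D ^ 2 / lam

/-- The beam-depth boundary `r_BD` at spatial angle `θ`, for an array of aperture `D` at wavelength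
`lam` with threshold parameter `β`: users closer than this have a beam depth of finite length. -/
def beamDepthBoundary (D lam β θ : K) : K :=
  D ^ 2 * (1 - θ ^ 2) / (2 * lam * β ^ 2)

/-- The right end of the beam-depth interval of a user at distance `r`, where `b` is the beam-depth
boundary. It is meaningful for `r < b`, and is the junk value `0` at `r = b`, where the true right
end is infinite. -/
def beamDepthRight (b r : K) : K :=
  r * b / (b - r)

/-- The distance threshold `r_DT` for an array of arbitrary aperture `D`. The formula for spacing
`lam / 2` is recovered in `distanceThreshold_half_wavelength`. -/
def distanceThreshold (D lam β θ : K) : K :=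
  2 * D ^ 2 * (1 - θ ^ 2) / (lam * (4 * β ^ 2 + (1 - θ ^ 2)))

theorem inv_beamDepthRight {b r : K} (hb : b ≠ 0) (hr : r ≠ 0) :
    (beamDepthRight b r)⁻¹ = r⁻¹ - b⁻¹ := by
  rw [beamDepthRight, inv_div, inv_sub_inv hr hb]

theorem beamDepthRight_eq_iff {b r R : K} (hb : b ≠ 0) (hr : r ≠ 0) :
    beamDepthRight b r = R ↔ r⁻¹ = b⁻¹ + R⁻¹ := by
  rw [← inv_inj, inv_beamDepthRight hb hr, sub_eq_iff_eq_add']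

theorem inv_distanceThreshold [CharZero K] {D lam β θ : K} (hθ : θ ^ 2 ≠ 1) :
    (distanceThreshold D lam β θ)⁻¹ =
      (beamDepthBoundary D lam β θ)⁻¹ + (rayleighDistance D lam)⁻¹ := by
  have hs : 1 - θ ^ 2 ≠ 0 := sub_ne_zero.mpr hθ.symm
  simp only [distanceThreshold, beamDepthBoundary, rayleighDistance, inv_div]
  field_simp
  ring

theorem distanceThreshold_half_wavelength [CharZero K] (n lam β θ : K) :
    distanceThreshold (n * (lam / 2)) lam β θ =
      n ^ 2 * lam * (1 - θ ^ 2) / (8 * β ^ 2 + 2 * (1 - θ ^ 2)) := by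
  have hden : 8 * β ^ 2 + 2 * (1 - θ ^ 2) = 2 * (4 * β ^ 2 + (1 - θ ^ 2)) := by ring
  rw [distanceThreshold, hden]
  field_simp

end Field

section OrderedField

variable {K : Type*} [Field K] [LinearOrder K] [IsStrictOrderedRing K] {D lam β θ : K}

theorem rayleighDistance_pos (hD : D ≠ 0) (hlam : 0 < lam) : 0 < rayleighDistance D lam := by
  unfold rayleighDistance
  positivity

theorem beamDepthBoundary_pos (hD : D ≠ 0) (hlam : 0 < lam) (hβ : β ≠ 0) (hθ : θ ^ 2 < 1) :
    0 < beamDepthBoundary D lam β θ := by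
  have : 0 < 1 - θ ^ 2 := sub_pos.mpr hθ
  unfold beamDepthBoundary
  positivity

theorem distanceThreshold_pos (hD : D ≠ 0) (hlam : 0 < lam) (hθ : θ ^ 2 < 1) :
    0 < distanceThreshold D lam β θ := by
  have : 0 < 1 - θ ^ 2 := sub_pos.mpr hθ
  unfold distanceThreshold
  positivity

theorem distanceThreshold_lt_beamDepthBoundary (hD : D ≠ 0) (hlam : 0 < lam) (hβ : β ≠ 0)
    (hθ : θ ^ 2 < 1) : distanceThreshold D lam β θ < beamDepthBoundary D lam β θ := by
  rw [← inv_lt_inv₀ (beamDepthBoundary_pos hD hlam hβ hθ) (distanceThreshold_pos hD hlam hθ),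
    inv_distanceThreshold hθ.ne]
  exact lt_add_of_pos_right _ (inv_pos.mpr (rayleighDistance_pos hD hlam))

theorem beamDepthRight_distanceThreshold (hD : D ≠ 0) (hlam : 0 < lam) (hβ : β ≠ 0)
    (hθ : θ ^ 2 < 1) :
    beamDepthRight (beamDepthBoundary D lam β θ) (distanceThreshold D lam β θ) =
      rayleighDistance D lam :=
  (beamDepthRight_eq_iff (beamDepthBoundary_pos hD hlam hβ hθ).ne'
    (distanceThreshold_pos hD hlam hθ).ne').mpr (inv_distanceThreshold hθ.ne)

theorem stmt_15_general (hD : D ≠ 0) (hlam : 0 < lam) (hβ : β ≠ 0) (hθ : θ ^ 2 < 1) :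
    (0 < distanceThreshold D lam β θ ∧
        distanceThreshold D lam β θ < beamDepthBoundary D lam β θ) ∧
      beamDepthRight (beamDepthBoundary D lam β θ) (distanceThreshold D lam β θ) =
        rayleighDistance D lam :=
  ⟨⟨distanceThreshold_pos hD hlam hθ, distanceThreshold_lt_beamDepthBoundary hD hlam hβ hθ⟩,
    beamDepthRight_distanceThreshold hD hlam hβ hθ⟩

end OrderedField

/-- The distance threshold `r_DT` is exactly the distance whose right
beam-depth boundary equals the Rayleigh distance. -/
theorem stmt_15 (N : ℕ) (hN : 0 < N) (lam β θ : ℝ)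
    (hlam : 0 < lam) (hβ : 0 < β) (hθ : -1 < θ ∧ θ < 1)
    (d rBD rRay rDT : ℝ)
    (hd : d = lam / 2)
    (hBD : rBD = (N : ℝ) ^ 2 * d ^ 2 * (1 - θ ^ 2) / (2 * lam * β ^ 2))
    (hRay : rRay = 2 * ((N : ℝ) * d) ^ 2 / lam)
    (hDT : rDT = (N : ℝ) ^ 2 * lam * (1 - θ ^ 2) / (8 * β ^ 2 + 2 * (1 - θ ^ 2))) :
    (0 < rDT ∧ rDT < rBD) ∧ rDT * rBD / (rBD - rDT) = rRay := by
  rw [← mul_pow] at hBD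
  rw [← distanceThreshold_half_wavelength, ← hd] at hDT
  have hD : (N : ℝ) * d ≠ 0 := by rw [hd]; positivity
  rw [hBD, hRay, hDT]
  exact stmt_15_general hD hlam hβ.ne' ((sq_lt_one_iff_abs_lt_one θ).mpr (abs_lt.mpr hθ))
end

section
/- Let N be a positive integer, λ > 0, and β > 0. Define r_DT(θ) = N²·λ·(1 − θ²)/(8·β² + 2·(1 − θ²)) for θ ∈ [−1, 1]. Then for all θ ∈ [−1, 1], r_DT(θ) ≤ r_DT(0) = N²·λ/(8·β² + 2), with equality if and only if θ = 0; i.e., the distance threshold attains its maximum at spatial angle zero. -/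
/-!
In the variable `u = 1 - θ²` the threshold is the linear fractional function `c u / (a + b u)`. Its
determinant `c a` is positive, so it is strictly increasing in `u` as long as the denominator stays
positive, and `u` attains its maximum `1` exactly at `θ = 0`.
-/

section LinearOrderedField

variable {𝕜 : Type*} [Field 𝕜] [LinearOrder 𝕜] [IsStrictOrderedRing 𝕜] {a b c : 𝕜}

theorem strictMonoOn_mul_div_add_mul (ha : 0 < a) (hc : 0 < c) :
    StrictMonoOn (fun u ↦ c * u / (a + b * u)) {u | 0 < a + b * u} := by
  intro u hu v hv huv
  refine (div_lt_div_iff₀ hu hv).mpr ?_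
  calc c * u * (a + b * v) = c * a * u + c * b * u * v := by ring
    _ < c * a * v + c * b * u * v := by gcongr
    _ = c * v * (a + b * u) := by ring

theorem add_mul_one_sub_sq_pos (ha : 0 < a) (hb : 0 ≤ b) {θ : 𝕜} (hθ : θ ∈ Set.Icc (-1) 1) :
    0 < a + b * (1 - θ ^ 2) :=
  add_pos_of_pos_of_nonneg ha <|
    mul_nonneg hb <| sub_nonneg.mpr <| (sq_le_one_iff_abs_le_one θ).mpr <| abs_le.mpr hθ

theorem stmt_16_general (ha : 0 < a) (hc : 0 < c) (hab : 0 < a + b) (r : 𝕜 → 𝕜)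
    (hr : ∀ θ, r θ = c * (1 - θ ^ 2) / (a + b * (1 - θ ^ 2))) :
    (∀ θ, 0 < a + b * (1 - θ ^ 2) → r θ ≤ r 0) ∧
    r 0 = c / (a + b) ∧
    (∀ θ, 0 < a + b * (1 - θ ^ 2) → (r θ = r 0 ↔ θ = 0)) := by
  have r_zero : r 0 = c * 1 / (a + b * 1) := by simp [hr]
  have one_mem : (1 : 𝕜) ∈ {u | 0 < a + b * u} := by simpa using hab
  have hmono := strictMonoOn_mul_div_add_mul (b := b) ha hc
  refine ⟨fun θ hθ ↦ ?_, by simpa using r_zero, fun θ hθ ↦ ?_⟩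
  · rw [hr θ, r_zero]
    exact (hmono.le_iff_le hθ one_mem).mpr (sub_le_self 1 (sq_nonneg θ))
  · rw [hr θ, r_zero]
    calc _ ↔ 1 - θ ^ 2 = 1 := hmono.injOn.eq_iff hθ one_mem
      _ ↔ θ = 0 := by simp

end LinearOrderedField

/-- The distance threshold `r_DT(θ)` attains its maximum
`N²λ/(8β² + 2)` exactly at spatial angle `θ = 0`. -/
theorem stmt_16 (N : ℕ) (hN : 0 < N) (lam β : ℝ)
    (hlam : 0 < lam) (hβ : 0 < β)
    (rDT : ℝ → ℝ)
    (hDT : ∀ θ : ℝ, rDT θ =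
      (N : ℝ) ^ 2 * lam * (1 - θ ^ 2) / (8 * β ^ 2 + 2 * (1 - θ ^ 2))) :
    (∀ θ ∈ Set.Icc (-1 : ℝ) 1, rDT θ ≤ rDT 0) ∧
    rDT 0 = (N : ℝ) ^ 2 * lam / (8 * β ^ 2 + 2) ∧
    (∀ θ ∈ Set.Icc (-1 : ℝ) 1, (rDT θ = rDT 0 ↔ θ = 0)) := by
  have ha : 0 < 8 * β ^ 2 := by positivity
  obtain ⟨hle, h_zero, heq⟩ :=
    stmt_16_general ha (by positivity) (by positivity) rDT hDT
  exact ⟨fun θ hθ ↦ hle θ (add_mul_one_sub_sq_pos ha zero_le_two hθ), h_zero,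
    fun θ hθ ↦ heq θ (add_mul_one_sub_sq_pos ha zero_le_two hθ)⟩
end
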